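/- arXiv:1508.04192 — 4 statements merged into one kernel-verified Lean document; each statement's English description precedes it below -/
import Mathlib

section
/- Under the Weierstrass setting, assume that I_s + J₁ is invertible (equivalently, −1 is not an eigenvalue of the pencil inside Γ) and that rank(U) = s. Then rank((A·U + B·U)*·(T^{-1})_{(:,1:s)}) = s and rank((S^{-1})_{(1:s,:)}·U) = s. -/
open Matrix

/-- If `I_s + J₁` is invertible and `rank U = s`, then
`rank((A·U + B·U)*·(T⁻¹)_{(:,1:s)}) = s` and `rank((S⁻¹)_{(1:s,:)}·U) = s`. -/
theorem rank_left_right_factors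
    (n d s h g : ℕ) (hs : 0 < s) (hsd : s ≤ d) (hdn : d ≤ n) (hg : 1 ≤ g)
    (hhg : s ≤ h * g)
    (A B S T : Matrix (Fin n) (Fin n) ℂ) (hS : IsUnit S) (hT : IsUnit T)
    (J : Matrix (Fin d) (Fin d) ℂ) (hJtri : J.BlockTriangular (id : Fin d → Fin d))
    (N : Matrix (Fin (n - d)) (Fin (n - d)) ℂ) (hN : IsNilpotent N)
    (hA : T * A * S =
      (Matrix.fromBlocks J 0 0 (1 : Matrix (Fin (n - d)) (Fin (n - d)) ℂ)).submatrix
        (finSumFinEquiv.trans (finCongr (Nat.add_sub_cancel' hdn))).symm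
        (finSumFinEquiv.trans (finCongr (Nat.add_sub_cancel' hdn))).symm)
    (hB : T * B * S =
      (Matrix.fromBlocks (1 : Matrix (Fin d) (Fin d) ℂ) 0 0 N).submatrix
        (finSumFinEquiv.trans (finCongr (Nat.add_sub_cancel' hdn))).symm
        (finSumFinEquiv.trans (finCongr (Nat.add_sub_cancel' hdn))).symm)
    (J₁ : Matrix (Fin s) (Fin s) ℂ) (J₂ : Matrix (Fin (d - s)) (Fin (d - s)) ℂ)
    (hJ : J = (Matrix.fromBlocks J₁ 0 0 J₂).submatrix
        (finSumFinEquiv.trans (finCongr (Nat.add_sub_cancel' hsd))).symm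
        (finSumFinEquiv.trans (finCongr (Nat.add_sub_cancel' hsd))).symm)
    (F : ℕ → Matrix (Fin n) (Fin n) ℂ)
    (hF : ∀ k : ℕ, F k =
      S.submatrix id (Fin.castLE (hsd.trans hdn)) * (J₁ ^ k) *
        S⁻¹.submatrix (Fin.castLE (hsd.trans hdn)) id)
    (Y : Matrix (Fin n) (Fin h) ℂ)
    (U : Matrix (Fin n) (Fin g × Fin h) ℂ)
    (hU : ∀ (i : Fin n) (p : Fin g × Fin h), U i p = (F (p.1 : ℕ) * Y) i p.2)
    (hinv : IsUnit ((1 : Matrix (Fin s) (Fin s) ℂ) + J₁))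
    (hrankU : U.rank = s) :
    ((A * U + B * U)ᴴ * T⁻¹.submatrix id (Fin.castLE (hsd.trans hdn))).rank = s ∧
      (S⁻¹.submatrix (Fin.castLE (hsd.trans hdn)) id * U).rank = s := by
  set c : Fin s → Fin n := Fin.castLE (hsd.trans hdn) with hc
  have hcinj : Function.Injective c := Fin.castLE_injective _
  have hSS : S⁻¹ * S = 1 := Matrix.nonsing_inv_mul S ((Matrix.isUnit_iff_isUnit_det S).1 hS)
  have hTT : T⁻¹ * T = 1 := Matrix.nonsing_inv_mul T ((Matrix.isUnit_iff_isUnit_det T).1 hT)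
  have hTT' : T * T⁻¹ = 1 := Matrix.mul_nonsing_inv T ((Matrix.isUnit_iff_isUnit_det T).1 hT)
  have key : ∀ P Q : Matrix (Fin n) (Fin n) ℂ, P * Q = 1 →
      P.submatrix c id * Q.submatrix id c = 1 := by
    intro P Q hPQ
    have := Matrix.submatrix_mul P Q c (id : Fin n → Fin n) c Function.bijective_id
    rw [← this, hPQ, Matrix.submatrix_one c hcinj]
  obtain ⟨W, hW⟩ : ∃ W : Matrix (Fin s) (Fin g × Fin h) ℂ, U = S.submatrix id c * W := by
    refine ⟨Matrix.of fun a p => (J₁ ^ (p.1 : ℕ) * (S⁻¹.submatrix c id * Y)) a p.2, ?_⟩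
    ext i p
    rw [hU, hF, Matrix.mul_assoc, Matrix.mul_assoc, Matrix.mul_apply, Matrix.mul_apply]
    rfl
  have hWrank : W.rank = s := by
    apply le_antisymm
    · simpa using W.rank_le_card_height
    · refine hrankU.symm.le.trans ?_
      rw [hW]
      exact Matrix.rank_mul_le_right _ _
  have hSW : S⁻¹.submatrix c id * U = W := by
    rw [hW, ← Matrix.mul_assoc, key _ _ hSS, Matrix.one_mul]
  refine ⟨?_, by rw [hSW, hWrank]⟩
  have hblock : (T * A * S + T * B * S).submatrix id c =
      (1 : Matrix (Fin n) (Fin n) ℂ).submatrix id c * (1 + J₁) := by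
    have h1 : ∀ j : Fin s, c j = (finSumFinEquiv.trans (finCongr (Nat.add_sub_cancel' hdn)))
        (Sum.inl ((finSumFinEquiv.trans (finCongr (Nat.add_sub_cancel' hsd))) (Sum.inl j))) := by
      intro j
      ext
      simp [hc]
    rw [hA, hB, hJ]
    ext i j
    obtain ⟨x, rfl⟩ := (finSumFinEquiv.trans (finCongr (Nat.add_sub_cancel' hdn))).surjective i
    rw [Matrix.mul_apply]
    simp only [Matrix.submatrix_apply, Matrix.add_apply, id, h1, Equiv.symm_apply_apply,
      Matrix.one_apply, EmbeddingLike.apply_eq_iff_eq]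
    rcases x with x | x
    · obtain ⟨y, rfl⟩ := (finSumFinEquiv.trans (finCongr (Nat.add_sub_cancel' hsd))).surjective x
      simp only [Matrix.fromBlocks_apply₁₁, Matrix.submatrix_apply, Equiv.symm_apply_apply,
        Sum.inl.injEq, Matrix.one_apply, EmbeddingLike.apply_eq_iff_eq]
      rcases y with y | y
      · simp [add_comm]
      · simp
    · simp
  have hAB : A * U + B * U = T⁻¹.submatrix id c * (1 + J₁) * W := by
    have e1 : (A + B) * S.submatrix id c = T⁻¹.submatrix id c * (1 + J₁) := by
      have e2 : (A + B) * S = T⁻¹ * (T * A * S + T * B * S) := by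
        rw [← Matrix.add_mul, ← Matrix.mul_add, ← Matrix.mul_assoc, ← Matrix.mul_assoc, hTT,
          Matrix.one_mul]
      have e3 : ∀ P Q : Matrix (Fin n) (Fin n) ℂ,
          P * Q.submatrix id c = (P * Q).submatrix id c := fun P Q => rfl
      rw [e3, e2, ← e3, hblock, ← Matrix.mul_assoc, e3, Matrix.mul_one]
    rw [← Matrix.add_mul, hW, ← Matrix.mul_assoc, e1]
  have hu1 : IsUnit ((T⁻¹.submatrix id c)ᴴ * T⁻¹.submatrix id c) := by
    open scoped ComplexOrder in
    refine Matrix.PosDef.isUnit (Matrix.PosDef.conjTranspose_mul_self _ ?_)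
    intro x y hxy
    have := congrArg (fun v => T.submatrix c id *ᵥ v) hxy
    simpa [Matrix.mulVec_mulVec, key _ _ hTT'] using this
  have hu : IsUnit ((1 + J₁)ᴴ * ((T⁻¹.submatrix id c)ᴴ * T⁻¹.submatrix id c)) :=
    IsUnit.mul hinv.star hu1
  have hWc : Wᴴ.rank = s := by
    open scoped ComplexOrder in
    rw [Matrix.rank_conjTranspose, hWrank]
  rw [hAB, Matrix.conjTranspose_mul, Matrix.conjTranspose_mul, Matrix.mul_assoc, Matrix.mul_assoc,
    Matrix.rank_mul_eq_left_of_isUnit_det _ _ ((Matrix.isUnit_iff_isUnit_det _).1 hu), hWc]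
end

section
/- Under the Weierstrass setting, assume that I_s + J₁ is invertible and rank(U) = s. Set Â := (A·U + B·U)*·A·U and B̂ := (A·U + B·U)*·B·U, which are hg×hg matrices. Then for every z ∈ ℂ, rank(z·B̂ − Â) = rank(z·I_s − J₁); in particular rank(z·B̂ − Â) ≤ s for all z, and rank(z·B̂ − Â) < s if and only if z is a diagonal entry of J₁. -/
open Matrix

lemma aux_right_inv {s : ℕ} {m : Type*} [Fintype m] [DecidableEq m] (W : Matrix (Fin s) m ℂ)
    (h : W.rank = s) : ∃ V : Matrix m (Fin s) ℂ, W * V = 1 := by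
  rw [← Matrix.mulVec_surjective_iff_exists_right_inverse]
  have : LinearMap.range W.mulVecLin = ⊤ := by
    apply Submodule.eq_top_of_finrank_eq
    rw [← Matrix.rank, h]; simp
  intro y
  have hy : y ∈ LinearMap.range W.mulVecLin := by rw [this]; trivial
  exact hy

lemma aux_isUnit {s : ℕ} (W : Matrix (Fin s) (Fin s) ℂ)
    (h : W.rank = s) : IsUnit W := by
  obtain ⟨V, hV⟩ := aux_right_inv W h
  exact IsUnit.of_mul_eq_one _ hV

open scoped ComplexOrder in
lemma aux_rank {s n : ℕ} {m : Type*} [Fintype m] [DecidableEq m] (W : Matrix (Fin s) m ℂ)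
    (hW : W.rank = s) (P : Matrix (Fin n) (Fin s) ℂ) (Q : Matrix (Fin s) (Fin n) ℂ)
    (hP : Q * P = 1) (K M : Matrix (Fin s) (Fin s) ℂ) (hK : IsUnit K) :
    ((P * K * W)ᴴ * (P * M * W)).rank = M.rank := by
  obtain ⟨V, hV⟩ := aux_right_inv W hW
  have hPr : P.rank = s := by
    apply le_antisymm
    · simpa using P.rank_le_card_width
    · have := Matrix.rank_mul_le_right Q P
      rw [hP, Matrix.rank_one] at this; simpa using this
  have hPP : IsUnit (Pᴴ * P) := by
    apply aux_isUnit
    rw [Matrix.rank_conjTranspose_mul_self, hPr]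
  have hKK : IsUnit (Kᴴ * (Pᴴ * P)) := by
    apply IsUnit.mul _ hPP
    exact (Matrix.isUnit_conjTranspose K).2 hK
  have h1 : (P * K * W)ᴴ * (P * M * W) = Wᴴ * (Kᴴ * (Pᴴ * P) * M) * W := by
    simp only [Matrix.conjTranspose_mul, Matrix.mul_assoc]
  have h2 : (Kᴴ * (Pᴴ * P) * M).rank = M.rank :=
    Matrix.rank_mul_eq_right_of_isUnit_det _ _ ((Matrix.isUnit_iff_isUnit_det _).1 hKK)
  rw [h1, ← h2]
  set X := Kᴴ * (Pᴴ * P) * M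
  apply le_antisymm
  · exact (Matrix.rank_mul_le_left _ _).trans (Matrix.rank_mul_le_right _ _)
  · have hV' : Vᴴ * Wᴴ = 1 := by rw [← Matrix.conjTranspose_mul, hV, Matrix.conjTranspose_one]
    have : X = Vᴴ * (Wᴴ * X * W) * V := by
      calc X = (Vᴴ * Wᴴ) * X * (W * V) := by rw [hV, hV']; simp
        _ = _ := by simp only [Matrix.mul_assoc]
    conv_lhs => rw [this]
    exact (Matrix.rank_mul_le_left _ _).trans (Matrix.rank_mul_le_right _ _)

lemma aux_cast {a b : ℕ} (h : a ≤ b) (i : Fin a) :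
    (finSumFinEquiv.trans (finCongr (Nat.add_sub_cancel' h))).symm (Fin.castLE h i) = Sum.inl i := by
  rw [Equiv.symm_apply_eq]
  ext; simp

lemma aux_block {a b : ℕ} (h : a ≤ b) (X : Matrix (Fin a) (Fin a) ℂ)
    (Z : Matrix (Fin (b - a)) (Fin (b - a)) ℂ) :
    ((Matrix.fromBlocks X 0 0 Z).submatrix
        (finSumFinEquiv.trans (finCongr (Nat.add_sub_cancel' h))).symm
        (finSumFinEquiv.trans (finCongr (Nat.add_sub_cancel' h))).symm) *
      (1 : Matrix (Fin b) (Fin b) ℂ).submatrix id (Fin.castLE h)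
     = (1 : Matrix (Fin b) (Fin b) ℂ).submatrix id (Fin.castLE h) * X := by
  set e := (finSumFinEquiv.trans (finCongr (Nat.add_sub_cancel' h))) with he
  have hE : (1 : Matrix (Fin b) (Fin b) ℂ).submatrix id (Fin.castLE h)
      = (Matrix.fromRows (1 : Matrix (Fin a) (Fin a) ℂ) 0).submatrix e.symm id := by
    ext i j
    obtain ⟨i, rfl⟩ := e.surjective i
    have : Fin.castLE h j = e (Sum.inl j) := by
      rw [← Equiv.symm_apply_eq]; exact aux_cast h j
    rw [Matrix.submatrix_apply, Matrix.submatrix_apply, this, Equiv.symm_apply_apply]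
    simp only [id, Matrix.one_apply, e.injective.eq_iff]
    rcases i with i | i <;> simp [Matrix.one_apply]
  rw [hE, Matrix.submatrix_mul_equiv]
  ext i j
  obtain ⟨i, rfl⟩ := e.surjective i
  rcases i with i | i <;> simp [Matrix.mul_apply, Matrix.one_apply]

/-- With `Â = (AU+BU)*·A·U` and `B̂ = (AU+BU)*·B·U`, for every `z`,
`rank(z·B̂ − Â) = rank(z·I_s − J₁)`; in particular the rank is at most `s` and drops
below `s` exactly at the diagonal entries of `J₁`. -/
theorem rank_oblique_projected_pencil
    (n d s h g : ℕ) (hs : 0 < s) (hsd : s ≤ d) (hdn : d ≤ n) (hg : 1 ≤ g)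
    (hhg : s ≤ h * g)
    (A B S T : Matrix (Fin n) (Fin n) ℂ) (hS : IsUnit S) (hT : IsUnit T)
    (J : Matrix (Fin d) (Fin d) ℂ) (hJtri : J.BlockTriangular (id : Fin d → Fin d))
    (N : Matrix (Fin (n - d)) (Fin (n - d)) ℂ) (hN : IsNilpotent N)
    (hA : T * A * S =
      (Matrix.fromBlocks J 0 0 (1 : Matrix (Fin (n - d)) (Fin (n - d)) ℂ)).submatrix
        (finSumFinEquiv.trans (finCongr (Nat.add_sub_cancel' hdn))).symm
        (finSumFinEquiv.trans (finCongr (Nat.add_sub_cancel' hdn))).symm)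
    (hB : T * B * S =
      (Matrix.fromBlocks (1 : Matrix (Fin d) (Fin d) ℂ) 0 0 N).submatrix
        (finSumFinEquiv.trans (finCongr (Nat.add_sub_cancel' hdn))).symm
        (finSumFinEquiv.trans (finCongr (Nat.add_sub_cancel' hdn))).symm)
    (J₁ : Matrix (Fin s) (Fin s) ℂ) (J₂ : Matrix (Fin (d - s)) (Fin (d - s)) ℂ)
    (hJ : J = (Matrix.fromBlocks J₁ 0 0 J₂).submatrix
        (finSumFinEquiv.trans (finCongr (Nat.add_sub_cancel' hsd))).symm
        (finSumFinEquiv.trans (finCongr (Nat.add_sub_cancel' hsd))).symm)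
    (F : ℕ → Matrix (Fin n) (Fin n) ℂ)
    (hF : ∀ k : ℕ, F k =
      S.submatrix id (Fin.castLE (hsd.trans hdn)) * (J₁ ^ k) *
        S⁻¹.submatrix (Fin.castLE (hsd.trans hdn)) id)
    (Y : Matrix (Fin n) (Fin h) ℂ)
    (U : Matrix (Fin n) (Fin g × Fin h) ℂ)
    (hU : ∀ (i : Fin n) (p : Fin g × Fin h), U i p = (F (p.1 : ℕ) * Y) i p.2)
    (hinv : IsUnit ((1 : Matrix (Fin s) (Fin s) ℂ) + J₁))
    (hrankU : U.rank = s)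
    (Ahat Bhat : Matrix (Fin g × Fin h) (Fin g × Fin h) ℂ)
    (hAhat : Ahat = (A * U + B * U)ᴴ * (A * U))
    (hBhat : Bhat = (A * U + B * U)ᴴ * (B * U)) :
    ∀ z : ℂ,
      (z • Bhat - Ahat).rank = (z • (1 : Matrix (Fin s) (Fin s) ℂ) - J₁).rank ∧
      (z • Bhat - Ahat).rank ≤ s ∧
      ((z • Bhat - Ahat).rank < s ↔ ∃ i : Fin s, z = J₁ i i) := by
  classical
  set c := Fin.castLE (hsd.trans hdn) with hc
  set E₁ := (1 : Matrix (Fin d) (Fin d) ℂ).submatrix id (Fin.castLE hsd) with hE₁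
  set E₂ := (1 : Matrix (Fin n) (Fin n) ℂ).submatrix id (Fin.castLE hdn) with hE₂
  have hJE : J * E₁ = E₁ * J₁ := by rw [hJ]; exact aux_block hsd J₁ J₂
  have hAE : T * A * S * E₂ = E₂ * J := by rw [hA]; exact aux_block hdn J 1
  have hBE : T * B * S * E₂ = E₂ * (1 : Matrix (Fin d) (Fin d) ℂ) := by rw [hB]; exact aux_block hdn 1 N
  have hEE : E₂ * E₁ = (1 : Matrix (Fin n) (Fin n) ℂ).submatrix id c := by
    ext i j
    simp only [hE₁, hE₂, Matrix.mul_apply, Matrix.submatrix_apply, id, Matrix.one_apply]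
    rw [Finset.sum_eq_single (Fin.castLE hsd j)]
    · simp [hc]
    · intro b _ hb; simp [hb]
    · simp
  set E := (1 : Matrix (Fin n) (Fin n) ℂ).submatrix id c with hE
  have hAE' : T * A * S * E = E * J₁ := by
    rw [← hEE, ← Matrix.mul_assoc, hAE, Matrix.mul_assoc, hJE, Matrix.mul_assoc]
  have hBE' : T * B * S * E = E := by
    rw [← hEE, ← Matrix.mul_assoc, hBE, Matrix.mul_one]
  have hSE : S.submatrix id c = S * E := by
    ext i j; simp [hE, Matrix.mul_apply, Matrix.one_apply]
  have hEt : Eᵀ * E = 1 := by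
    ext i j
    simp [hE, Matrix.mul_apply, Matrix.one_apply, hc, eq_comm]
  have hTd : IsUnit T.det := (Matrix.isUnit_iff_isUnit_det _).1 hT
  let W : Matrix (Fin s) (Fin g × Fin h) ℂ :=
    fun i p => (J₁ ^ (p.1 : ℕ) * S⁻¹.submatrix c id * Y) i p.2
  have hUW : U = S * E * W := by
    ext i p
    rw [hU, hF, hSE, Matrix.mul_assoc (S * E), Matrix.mul_assoc (S * E)]
    rw [Matrix.mul_apply, Matrix.mul_apply]
  have hW : W.rank = s := by
    apply le_antisymm
    · simpa using W.rank_le_card_height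
    · refine hrankU.ge.trans ?_
      rw [hUW]; exact Matrix.rank_mul_le_right _ _
  have key : ∀ X : Matrix (Fin n) (Fin n) ℂ, X = T⁻¹ * (T * X) := fun X => by
    rw [← Matrix.mul_assoc, Matrix.nonsing_inv_mul _ hTd, Matrix.one_mul]
  have hAU : A * U = (T⁻¹ * E) * J₁ * W := by
    rw [hUW, Matrix.mul_assoc T⁻¹, ← hAE']
    conv_lhs => rw [key A]
    simp only [Matrix.mul_assoc]
  have hBU : B * U = (T⁻¹ * E) * W := by
    conv_rhs => rw [← hBE']
    rw [hUW]
    conv_lhs => rw [key B]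
    simp only [Matrix.mul_assoc]
  have hQ : (Eᵀ * T) * (T⁻¹ * E) = 1 := by
    rw [Matrix.mul_assoc, ← Matrix.mul_assoc T, Matrix.mul_nonsing_inv _ hTd, Matrix.one_mul, hEt]
  intro z
  have hsum : A * U + B * U = (T⁻¹ * E) * (1 + J₁) * W := by
    rw [hAU, hBU, Matrix.mul_add, Matrix.add_mul, Matrix.mul_one, add_comm]
  have hdiff : z • Bhat - Ahat =
      ((T⁻¹ * E) * (1 + J₁) * W)ᴴ * ((T⁻¹ * E) * (z • 1 - J₁) * W) := by
    rw [hAhat, hBhat, hsum, hAU, hBU, Matrix.mul_sub, Matrix.sub_mul, Matrix.mul_sub,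
      Matrix.mul_smul, Matrix.smul_mul, Matrix.mul_smul, Matrix.mul_one]
  have hr : (z • Bhat - Ahat).rank = (z • (1 : Matrix (Fin s) (Fin s) ℂ) - J₁).rank := by
    rw [hdiff]
    exact aux_rank W hW _ _ hQ _ _ hinv
  have hle : (z • (1 : Matrix (Fin s) (Fin s) ℂ) - J₁).rank ≤ s := by
    simpa using (z • (1 : Matrix (Fin s) (Fin s) ℂ) - J₁).rank_le_card_height
  refine ⟨hr, hr ▸ hle, ?_⟩
  rw [hr]
  have htri : (z • (1 : Matrix (Fin s) (Fin s) ℂ) - J₁).BlockTriangular id := by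
    intro i j hij
    have h1 : J (Fin.castLE hsd i) (Fin.castLE hsd j) = 0 := hJtri (by simpa using hij)
    rw [hJ, Matrix.submatrix_apply, aux_cast, aux_cast, Matrix.fromBlocks_apply₁₁] at h1
    have hne : i ≠ j := (ne_of_lt hij).symm
    simp [h1, Matrix.one_apply, hne]
  have hdet := Matrix.det_of_upperTriangular htri
  have h1 : (z • (1 : Matrix (Fin s) (Fin s) ℂ) - J₁).rank < s ↔
      (z • (1 : Matrix (Fin s) (Fin s) ℂ) - J₁).det = 0 := by
    constructor
    · intro hlt
      by_contra hne
      have := Matrix.rank_of_isUnit _ ((Matrix.isUnit_iff_isUnit_det _).2 (isUnit_iff_ne_zero.2 hne))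
      simp at this
      omega
    · intro h0
      refine lt_of_le_of_ne hle fun he => ?_
      have := (Matrix.isUnit_iff_isUnit_det _).1 (aux_isUnit _ he)
      rw [h0] at this
      simp at this
  rw [h1, hdet, Finset.prod_eq_zero_iff]
  simp [sub_eq_zero]
end

section
/- Under the Weierstrass setting, assume that I_s + J₁ is invertible and rank(U) = s. Let V, W ∈ ℂ^{n×s} be matrices whose column spaces equal the column space of U and of A·U + B·U, respectively. If y ∈ ℂ^s is nonzero and μ ∈ ℂ satisfies (W*·A·V)·y = μ·(W*·B·V)·y, then V·y ≠ 0, A·(V·y) = μ·B·(V·y), and μ is a diagonal entry of J₁ (i.e., an eigenvalue of the pencil zB − A inside Γ). -/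
open Matrix

open scoped ComplexOrder in
theorem aux_conj {n s : ℕ} (W : Matrix (Fin n) (Fin s) ℂ) (z : Fin s → ℂ)
    (h1 : (Wᴴ * W) *ᵥ z = 0) : W *ᵥ z = 0 :=
  (Matrix.conjTranspose_mul_self_mulVec_eq_zero W z).1 h1

theorem aux_symm_castLE {a b : ℕ} (h : a ≤ b) (j : Fin a) :
    (finSumFinEquiv.trans (finCongr (Nat.add_sub_cancel' h))).symm (Fin.castLE h j)
      = Sum.inl j := by
  rw [Equiv.symm_apply_eq]
  ext
  simp

theorem aux_blocks {a b s : ℕ} (h : a ≤ b) (hs : s ≤ a) (X : Matrix (Fin a) (Fin a) ℂ)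
    (Z : Matrix (Fin (b - a)) (Fin (b - a)) ℂ) (X₁ : Matrix (Fin s) (Fin s) ℂ)
    (hX : X.submatrix id (Fin.castLE hs)
      = (1 : Matrix (Fin a) (Fin a) ℂ).submatrix id (Fin.castLE hs) * X₁) :
    ((Matrix.fromBlocks X 0 0 Z).submatrix
        (finSumFinEquiv.trans (finCongr (Nat.add_sub_cancel' h))).symm
        (finSumFinEquiv.trans (finCongr (Nat.add_sub_cancel' h))).symm).submatrix id
          (Fin.castLE (hs.trans h))
      = (1 : Matrix (Fin b) (Fin b) ℂ).submatrix id (Fin.castLE (hs.trans h)) * X₁ := by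
  ext i j
  obtain ⟨k, rfl⟩ := (finSumFinEquiv.trans (finCongr (Nat.add_sub_cancel' h))).surjective i
  have hc : ∀ l : Fin s, Fin.castLE (hs.trans h) l
      = (finSumFinEquiv.trans (finCongr (Nat.add_sub_cancel' h))) (Sum.inl (Fin.castLE hs l)) := by
    intro l
    rw [← Equiv.symm_apply_eq]
    exact aux_symm_castLE h (Fin.castLE hs l)
  have hX' := fun p => congrFun (congrFun hX p) j
  simp only [Matrix.mul_apply, Matrix.submatrix_apply, id, Matrix.one_apply] at hX' ⊢
  simp only [hc, Equiv.symm_apply_apply, EmbeddingLike.apply_eq_iff_eq]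
  rcases k with k | k
  · simp [hX']
  · simp

/-- If the columns of `V` span `span{U}` and those of `W` span
`span{A·U + B·U}`, and `(W*·A·V)·y = μ·(W*·B·V)·y` with `y ≠ 0`, then `V·y ≠ 0`,
`A·(V·y) = μ·B·(V·y)`, and `μ` is a diagonal entry of `J₁`. -/
theorem ritz_pairs_are_eigenpairs
    (n d s h g : ℕ) (hs : 0 < s) (hsd : s ≤ d) (hdn : d ≤ n) (hg : 1 ≤ g)
    (hhg : s ≤ h * g)
    (A B S T : Matrix (Fin n) (Fin n) ℂ) (hS : IsUnit S) (hT : IsUnit T)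
    (J : Matrix (Fin d) (Fin d) ℂ) (hJtri : J.BlockTriangular (id : Fin d → Fin d))
    (N : Matrix (Fin (n - d)) (Fin (n - d)) ℂ) (hN : IsNilpotent N)
    (hA : T * A * S =
      (Matrix.fromBlocks J 0 0 (1 : Matrix (Fin (n - d)) (Fin (n - d)) ℂ)).submatrix
        (finSumFinEquiv.trans (finCongr (Nat.add_sub_cancel' hdn))).symm
        (finSumFinEquiv.trans (finCongr (Nat.add_sub_cancel' hdn))).symm)
    (hB : T * B * S =
      (Matrix.fromBlocks (1 : Matrix (Fin d) (Fin d) ℂ) 0 0 N).submatrix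
        (finSumFinEquiv.trans (finCongr (Nat.add_sub_cancel' hdn))).symm
        (finSumFinEquiv.trans (finCongr (Nat.add_sub_cancel' hdn))).symm)
    (J₁ : Matrix (Fin s) (Fin s) ℂ) (J₂ : Matrix (Fin (d - s)) (Fin (d - s)) ℂ)
    (hJ : J = (Matrix.fromBlocks J₁ 0 0 J₂).submatrix
        (finSumFinEquiv.trans (finCongr (Nat.add_sub_cancel' hsd))).symm
        (finSumFinEquiv.trans (finCongr (Nat.add_sub_cancel' hsd))).symm)
    (F : ℕ → Matrix (Fin n) (Fin n) ℂ)
    (hF : ∀ k : ℕ, F k =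
      S.submatrix id (Fin.castLE (hsd.trans hdn)) * (J₁ ^ k) *
        S⁻¹.submatrix (Fin.castLE (hsd.trans hdn)) id)
    (Y : Matrix (Fin n) (Fin h) ℂ)
    (U : Matrix (Fin n) (Fin g × Fin h) ℂ)
    (hU : ∀ (i : Fin n) (p : Fin g × Fin h), U i p = (F (p.1 : ℕ) * Y) i p.2)
    (hinv : IsUnit ((1 : Matrix (Fin s) (Fin s) ℂ) + J₁))
    (hrankU : U.rank = s)
    (V W : Matrix (Fin n) (Fin s) ℂ)
    (hV : LinearMap.range V.mulVecLin = LinearMap.range U.mulVecLin)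
    (hW : LinearMap.range W.mulVecLin = LinearMap.range (A * U + B * U).mulVecLin)
    (y : Fin s → ℂ) (hy : y ≠ 0) (μ : ℂ)
    (heig : (Wᴴ * A * V).mulVec y = μ • (Wᴴ * B * V).mulVec y) :
    V.mulVec y ≠ 0 ∧
      A.mulVec (V.mulVec y) = μ • B.mulVec (V.mulVec y) ∧
      ∃ i : Fin s, μ = J₁ i i := by
  have hsn := hsd.trans hdn
  set S₁ : Matrix (Fin n) (Fin s) ℂ := S.submatrix id (Fin.castLE (hsd.trans hdn)) with hS₁
  set E : Matrix (Fin n) (Fin s) ℂ :=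
    (1 : Matrix (Fin n) (Fin n) ℂ).submatrix id (Fin.castLE (hsd.trans hdn)) with hE
  have hJ1 : J.submatrix id (Fin.castLE hsd)
      = (1 : Matrix (Fin d) (Fin d) ℂ).submatrix id (Fin.castLE hsd) * J₁ := by
    rw [hJ]
    refine aux_blocks hsd le_rfl J₁ J₂ J₁ ?_
    ext i j
    simp [Matrix.mul_apply, Matrix.one_apply]
  have hTA : T * (A * S₁) = E * J₁ := by
    have h1 := aux_blocks hdn hsd J 1 J₁ hJ1
    rw [← hA] at h1
    rw [← h1, ← Matrix.mul_assoc]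
    ext i j
    simp [Matrix.mul_apply, hS₁]
  have hTB : T * (B * S₁) = E := by
    have h1 := aux_blocks hdn hsd 1 N 1 (by simp)
    rw [← hB, Matrix.mul_one] at h1
    rw [hE, ← h1, ← Matrix.mul_assoc]
    ext i j
    simp [Matrix.mul_apply, hS₁]
  have hTd : IsUnit T.det := (Matrix.isUnit_iff_isUnit_det T).1 hT
  have hAP : A * S₁ = B * S₁ * J₁ := by
    have h1 : T * (A * S₁) = T * (B * S₁ * J₁) := by
      rw [← Matrix.mul_assoc T (B * S₁), hTB, hTA]
    have h2 := congrArg (fun M => T⁻¹ * M) h1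
    simpa [Matrix.nonsing_inv_mul_cancel_left _ _ hTd] using h2
  have hPinj : ∀ x : Fin s → ℂ, (B * S₁) *ᵥ x = 0 → x = 0 := by
    intro x hx
    have h1 : E *ᵥ x = 0 := by
      rw [← hTB, ← Matrix.mulVec_mulVec, hx, Matrix.mulVec_zero]
    ext i
    have h2 := congrFun h1 (Fin.castLE (hsd.trans hdn) i)
    simpa [hE, Matrix.mulVec, dotProduct, Matrix.one_apply] using h2
  -- range of U
  have hUS : U = S₁ * (Matrix.of fun (i : Fin s) (p : Fin g × Fin h) =>
      (J₁ ^ (p.1 : ℕ) * (S⁻¹.submatrix (Fin.castLE (hsd.trans hdn)) id * Y)) i p.2) := by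
    ext i p
    rw [hU, hF, Matrix.mul_assoc, Matrix.mul_assoc, Matrix.mul_apply, Matrix.mul_apply]
    rfl
  have hle : LinearMap.range U.mulVecLin ≤ LinearMap.range S₁.mulVecLin := by
    rw [hUS, Matrix.mulVecLin_mul]
    exact LinearMap.range_comp_le_range _ _
  have hrange : LinearMap.range U.mulVecLin = LinearMap.range S₁.mulVecLin := by
    apply Submodule.eq_of_le_of_finrank_le hle
    have h1 : S₁.rank ≤ s := by simpa using S₁.rank_le_card_width
    have h2 : U.rank = Module.finrank ℂ (LinearMap.range U.mulVecLin) := rfl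
    have h3 : S₁.rank = Module.finrank ℂ (LinearMap.range S₁.mulVecLin) := rfl
    omega
  have hVinj : Function.Injective V.mulVecLin := by
    rw [← LinearMap.ker_eq_bot]
    have h1 := V.mulVecLin.finrank_range_add_finrank_ker
    rw [hV] at h1
    have h2 : U.rank = Module.finrank ℂ (LinearMap.range U.mulVecLin) := rfl
    rw [← h2, hrankU] at h1
    simp at h1
    exact h1
  have hVy : V *ᵥ y ≠ 0 := by
    intro h0
    apply hy
    apply hVinj
    simpa using h0
  obtain ⟨x, hx⟩ : ∃ x, S₁ *ᵥ x = V *ᵥ y := by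
    have : V.mulVecLin y ∈ LinearMap.range S₁.mulVecLin := by
      rw [← hrange, ← hV]; exact ⟨y, rfl⟩
    exact this
  have hx0 : x ≠ 0 := by
    rintro rfl
    exact hVy (by rw [← hx, Matrix.mulVec_zero])
  have hWr : ∀ v : Fin s → ℂ, ∃ z, W *ᵥ z = (B * S₁) *ᵥ v := by
    intro v
    have hid : IsUnit (1 + J₁).det := (Matrix.isUnit_iff_isUnit_det _).1 hinv
    have h1 : S₁.mulVecLin ((1 + J₁)⁻¹ *ᵥ v) ∈ LinearMap.range U.mulVecLin := by
      rw [hrange]; exact ⟨_, rfl⟩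
    obtain ⟨w, hw⟩ := h1
    simp only [Matrix.mulVecLin_apply] at hw
    have h2 : (A * U + B * U).mulVecLin w ∈ LinearMap.range W.mulVecLin := by
      rw [hW]; exact ⟨_, rfl⟩
    obtain ⟨z, hz⟩ := h2
    refine ⟨z, ?_⟩
    simp only [Matrix.mulVecLin_apply] at hz
    have h3 : A * S₁ + B * S₁ = B * S₁ * (1 + J₁) := by
      rw [hAP, Matrix.mul_add, Matrix.mul_one, add_comm]
    rw [hz, ← Matrix.add_mul, ← Matrix.mulVec_mulVec, hw, Matrix.mulVec_mulVec, Matrix.add_mul,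
      h3, Matrix.mulVec_mulVec, Matrix.mul_assoc (B * S₁), Matrix.mul_nonsing_inv _ hid,
      Matrix.mul_one]
  have hAv : A *ᵥ (V *ᵥ y) = (B * S₁) *ᵥ (J₁ *ᵥ x) := by
    rw [← hx, Matrix.mulVec_mulVec, hAP, Matrix.mulVec_mulVec]
  have hBv : B *ᵥ (V *ᵥ y) = (B * S₁) *ᵥ x := by
    rw [← hx, Matrix.mulVec_mulVec]
  have hdiff : A *ᵥ (V *ᵥ y) - μ • B *ᵥ (V *ᵥ y) = (B * S₁) *ᵥ (J₁ *ᵥ x - μ • x) := by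
    rw [hAv, hBv, Matrix.mulVec_sub, Matrix.mulVec_smul]
  have hzero : (B * S₁) *ᵥ (J₁ *ᵥ x - μ • x) = 0 := by
    obtain ⟨z, hz⟩ := hWr (J₁ *ᵥ x - μ • x)
    have h1 : Wᴴ *ᵥ (W *ᵥ z) = 0 := by
      rw [hz, ← hdiff, Matrix.mulVec_sub, Matrix.mulVec_smul, sub_eq_zero]
      simpa [Matrix.mulVec_mulVec, Matrix.mul_assoc] using heig
    rw [Matrix.mulVec_mulVec] at h1
    rw [← hz, aux_conj W z h1]
  refine ⟨hVy, ?_, ?_⟩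
  · rw [← sub_eq_zero, hdiff, hzero]
  · have h1 := hPinj _ hzero
    have h2 : (J₁ - Matrix.scalar (Fin s) μ) *ᵥ x = 0 := by
      rw [Matrix.sub_mulVec, ← h1]
      congr 1
      ext i
      simp [Matrix.mulVec_diagonal]
    have h3 : (J₁ - Matrix.scalar (Fin s) μ).det = 0 :=
      Matrix.exists_mulVec_eq_zero_iff.1 ⟨x, hx0, h2⟩
    have htri : (J₁ - Matrix.scalar (Fin s) μ).BlockTriangular id := by
      intro i j hij
      have hij' : j < i := hij
      have h4 : J (Fin.castLE hsd i) (Fin.castLE hsd j) = 0 := hJtri (by simpa using hij')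
      rw [hJ, Matrix.submatrix_apply, aux_symm_castLE, aux_symm_castLE] at h4
      simp only [Matrix.fromBlocks_apply₁₁] at h4
      simp [h4, hij'.ne']
    rw [Matrix.det_of_upperTriangular htri, Finset.prod_eq_zero_iff] at h3
    obtain ⟨i, -, hi⟩ := h3
    refine ⟨i, ?_⟩
    simp [sub_eq_zero] at hi
    exact hi.symm
end

section
/- Under the Weierstrass setting, assume that I_s + J₁ is invertible and rank(U) = s. Let V, W ∈ ℂ^{n×s} be matrices whose column spaces equal the column space of U and of A·U + B·U, respectively. Then there exists a nonzero constant c ∈ ℂ such that for every z ∈ ℂ, det(z·W*·B·V − W*·A·V) = c·det(z·I_s − J₁). In particular, the s×s matrix z·W*·B·V − W*·A·V is singular if and only if z is a diagonal entry of J₁. -/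
open Matrix

theorem aux_factor {m k l : Type*} [Fintype k] [Fintype l] [DecidableEq k] [DecidableEq l]
    (P : Matrix m k ℂ) (V : Matrix m l ℂ)
    (h : LinearMap.range V.mulVecLin ≤ LinearMap.range P.mulVecLin) :
    ∃ M : Matrix k l ℂ, V = P * M := by
  have h1 : ∀ j : l, ∃ x : k → ℂ, P *ᵥ x = V *ᵥ (Pi.single j 1) := by
    intro j
    have := h (LinearMap.mem_range_self V.mulVecLin (Pi.single j 1))
    obtain ⟨x, hx⟩ := this
    exact ⟨x, by simpa using hx⟩
  choose x hx using h1
  refine ⟨Matrix.of (fun i j => x j i), ?_⟩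
  ext i j
  have := congrFun (hx j) i
  rw [Matrix.mulVec_single_one] at this
  simp only [Matrix.col_apply] at this
  rw [← this]
  rfl

theorem aux_unit {m k : Type*} [Fintype m] [Fintype k] [DecidableEq k]
    (P V : Matrix m k ℂ) (R : Matrix k m ℂ) (hR : R * P = 1)
    (h : LinearMap.range V.mulVecLin = LinearMap.range P.mulVecLin) :
    ∃ M : Matrix k k ℂ, V = P * M ∧ M.det ≠ 0 := by
  obtain ⟨M, hM⟩ := aux_factor P V h.le
  obtain ⟨M', hM'⟩ := aux_factor V P h.ge
  refine ⟨M, hM, ?_⟩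
  have h1 : M * M' = 1 := by
    calc M * M' = (R * P) * (M * M') := by rw [hR, Matrix.one_mul]
      _ = R * ((P * M) * M') := by simp only [Matrix.mul_assoc]
      _ = 1 := by rw [← hM, ← hM', hR]
  intro h0
  have := congrArg Matrix.det h1
  simp [h0] at this

open scoped ComplexOrder in
theorem aux_gram {m k : Type*} [Fintype m] [Fintype k] [DecidableEq k]
    (Q : Matrix m k ℂ) (R : Matrix k m ℂ) (hR : R * Q = 1) : (Qᴴ * Q).det ≠ 0 := by
  intro h0
  obtain ⟨v, hv, hv0⟩ := Matrix.exists_mulVec_eq_zero_iff.mpr h0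
  apply hv
  have h1 : Q *ᵥ v = 0 := by
    rw [← Matrix.conjTranspose_mul_self_mulVec_eq_zero]; exact hv0
  calc v = (R * Q) *ᵥ v := by rw [hR, Matrix.one_mulVec]
    _ = 0 := by rw [← Matrix.mulVec_mulVec, h1, Matrix.mulVec_zero]

/-- If the columns of `V` span `span{U}` and those of `W` span
`span{A·U + B·U}`, then there is a nonzero constant `c` with
`det(z·W*·B·V − W*·A·V) = c·det(z·I_s − J₁)` for all `z`; in particular the projected
pencil is singular exactly at the diagonal entries of `J₁`. -/
theorem det_projected_pencil
    (n d s h g : ℕ) (hs : 0 < s) (hsd : s ≤ d) (hdn : d ≤ n) (hg : 1 ≤ g)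
    (hhg : s ≤ h * g)
    (A B S T : Matrix (Fin n) (Fin n) ℂ) (hS : IsUnit S) (hT : IsUnit T)
    (J : Matrix (Fin d) (Fin d) ℂ) (hJtri : J.BlockTriangular (id : Fin d → Fin d))
    (N : Matrix (Fin (n - d)) (Fin (n - d)) ℂ) (hN : IsNilpotent N)
    (hA : T * A * S =
      (Matrix.fromBlocks J 0 0 (1 : Matrix (Fin (n - d)) (Fin (n - d)) ℂ)).submatrix
        (finSumFinEquiv.trans (finCongr (Nat.add_sub_cancel' hdn))).symm
        (finSumFinEquiv.trans (finCongr (Nat.add_sub_cancel' hdn))).symm)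
    (hB : T * B * S =
      (Matrix.fromBlocks (1 : Matrix (Fin d) (Fin d) ℂ) 0 0 N).submatrix
        (finSumFinEquiv.trans (finCongr (Nat.add_sub_cancel' hdn))).symm
        (finSumFinEquiv.trans (finCongr (Nat.add_sub_cancel' hdn))).symm)
    (J₁ : Matrix (Fin s) (Fin s) ℂ) (J₂ : Matrix (Fin (d - s)) (Fin (d - s)) ℂ)
    (hJ : J = (Matrix.fromBlocks J₁ 0 0 J₂).submatrix
        (finSumFinEquiv.trans (finCongr (Nat.add_sub_cancel' hsd))).symm
        (finSumFinEquiv.trans (finCongr (Nat.add_sub_cancel' hsd))).symm)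
    (F : ℕ → Matrix (Fin n) (Fin n) ℂ)
    (hF : ∀ k : ℕ, F k =
      S.submatrix id (Fin.castLE (hsd.trans hdn)) * (J₁ ^ k) *
        S⁻¹.submatrix (Fin.castLE (hsd.trans hdn)) id)
    (Y : Matrix (Fin n) (Fin h) ℂ)
    (U : Matrix (Fin n) (Fin g × Fin h) ℂ)
    (hU : ∀ (i : Fin n) (p : Fin g × Fin h), U i p = (F (p.1 : ℕ) * Y) i p.2)
    (hinv : IsUnit ((1 : Matrix (Fin s) (Fin s) ℂ) + J₁))
    (hrankU : U.rank = s)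
    (V W : Matrix (Fin n) (Fin s) ℂ)
    (hV : LinearMap.range V.mulVecLin = LinearMap.range U.mulVecLin)
    (hW : LinearMap.range W.mulVecLin = LinearMap.range (A * U + B * U).mulVecLin) :
    (∃ c : ℂ, c ≠ 0 ∧ ∀ z : ℂ,
        (z • (Wᴴ * B * V) - Wᴴ * A * V).det =
          c * (z • (1 : Matrix (Fin s) (Fin s) ℂ) - J₁).det) ∧
      ∀ z : ℂ, (¬ IsUnit (z • (Wᴴ * B * V) - Wᴴ * A * V)) ↔ ∃ i : Fin s, z = J₁ i i := by
  classical
  set e₁ := finSumFinEquiv.trans (finCongr (Nat.add_sub_cancel' hdn)) with he₁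
  set e₂ := finSumFinEquiv.trans (finCongr (Nat.add_sub_cancel' hsd)) with he₂
  set ι : Fin s → Fin n := Fin.castLE (hsd.trans hdn) with hι
  have hιe : ∀ j, ι j = e₁ (Sum.inl (e₂ (Sum.inl j))) := by
    intro j; ext; simp [hι, he₁, he₂]
  have hιinj : Function.Injective ι := Fin.castLE_injective _
  have hSd : IsUnit S.det := (Matrix.isUnit_iff_isUnit_det S).mp hS
  have hTd : IsUnit T.det := (Matrix.isUnit_iff_isUnit_det T).mp hT
  have hJd : IsUnit (1 + J₁).det := (Matrix.isUnit_iff_isUnit_det _).mp hinv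
  set P : Matrix (Fin n) (Fin s) ℂ := S.submatrix id ι with hP
  set R : Matrix (Fin s) (Fin n) ℂ := S⁻¹.submatrix ι id with hR
  set E : Matrix (Fin n) (Fin s) ℂ := (1 : Matrix (Fin n) (Fin n) ℂ).submatrix id ι with hE
  set Q : Matrix (Fin n) (Fin s) ℂ := T⁻¹ * E with hQ
  have hRP : R * P = 1 := by
    have : R * P = (S⁻¹ * S).submatrix ι ι := by ext i j; rfl
    rw [this, Matrix.nonsing_inv_mul _ hSd, Matrix.submatrix_one _ hιinj]
  have hEE : Eᵀ * E = 1 := by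
    have : Eᵀ * E = ((1 : Matrix (Fin n) (Fin n) ℂ)ᵀ * 1).submatrix ι ι := by ext i j; rfl
    rw [this, Matrix.transpose_one, Matrix.one_mul, Matrix.submatrix_one _ hιinj]
  have hQl : (Eᵀ * T) * Q = 1 := by
    rw [hQ, Matrix.mul_assoc, Matrix.mul_nonsing_inv_cancel_left _ _ hTd, hEE]
  have hEJ : ∀ i j, (E * J₁) i j = ∑ k, (if i = ι k then J₁ k j else 0) := by
    intro i j
    simp [Matrix.mul_apply, hE, Matrix.one_apply]
  have hsumE : ∀ x, ∃ y, x = e₁ y := fun x => ⟨e₁.symm x, by simp⟩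
  have hsumD : ∀ x, ∃ y, x = e₂ y := fun x => ⟨e₂.symm x, by simp⟩
  have hTA : (T * A * S).submatrix id ι = E * J₁ := by
    rw [hA, hJ]
    ext i j
    rw [hEJ]
    obtain ⟨y, rfl⟩ := hsumE i
    rcases y with y | y
    · obtain ⟨w, rfl⟩ := hsumD y
      rcases w with w | w <;> simp [hιe]
    · simp [hιe]
  have hTB : (T * B * S).submatrix id ι = E := by
    rw [hB]
    ext i j
    obtain ⟨y, rfl⟩ := hsumE i
    rcases y with y | y
    · simp [hE, hιe, Matrix.one_apply]
    · simp [hE, hιe, Matrix.one_apply]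
  have hAP : A * P = Q * J₁ := by
    have h1 : T * (A * P) = E * J₁ := by
      rw [← hTA, ← Matrix.mul_assoc]; ext i j; rfl
    rw [hQ, Matrix.mul_assoc, ← h1, Matrix.nonsing_inv_mul_cancel_left _ _ hTd]
  have hBP : B * P = Q := by
    have h1 : T * (B * P) = E := by
      rw [← hTB, ← Matrix.mul_assoc]; ext i j; rfl
    rw [hQ, ← h1, Matrix.nonsing_inv_mul_cancel_left _ _ hTd]
  have hUP : LinearMap.range U.mulVecLin = LinearMap.range P.mulVecLin := by
    have hUK : U = P * Matrix.of (fun k (p : Fin g × Fin h) => (J₁ ^ (p.1 : ℕ) * R * Y) k p.2) := by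
      ext i p
      rw [hU, hF, Matrix.mul_assoc, Matrix.mul_assoc, ← Matrix.mul_assoc (J₁ ^ _)]
      rfl
    apply Submodule.eq_of_le_of_finrank_le
    · rw [hUK, Matrix.mulVecLin_mul]
      exact LinearMap.range_comp_le_range _ _
    · have h1 : P.rank ≤ s := by simpa using Matrix.rank_le_width P
      exact h1.trans hrankU.ge
  have hWr : LinearMap.range W.mulVecLin = LinearMap.range (Q * (1 + J₁)).mulVecLin := by
    have h1 : Q * (1 + J₁) = (A + B) * P := by
      rw [Matrix.add_mul, hAP, hBP, Matrix.mul_add, Matrix.mul_one, add_comm]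
    rw [hW, h1, ← Matrix.add_mul, Matrix.mulVecLin_mul, Matrix.mulVecLin_mul,
      LinearMap.range_comp, LinearMap.range_comp, hUP]
  obtain ⟨M, hVM, hM⟩ := aux_unit P V R hRP (hV.trans hUP)
  have hQ2 : ((1 + J₁)⁻¹ * (Eᵀ * T)) * (Q * (1 + J₁)) = 1 := by
    rw [Matrix.mul_assoc, ← Matrix.mul_assoc (Eᵀ * T), hQl, Matrix.one_mul,
      Matrix.nonsing_inv_mul _ hJd]
  obtain ⟨L, hWL, hL⟩ := aux_unit (Q * (1 + J₁)) W _ hQ2 hWr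
  set G := (1 + J₁) * L with hG
  have hWG : W = Q * G := by rw [hWL, Matrix.mul_assoc]
  have hGd : G.det ≠ 0 := by
    rw [hG, Matrix.det_mul]; exact mul_ne_zero hJd.ne_zero hL
  have key : ∀ z : ℂ, (z • (Wᴴ * B * V) - Wᴴ * A * V).det =
      ((Gᴴ).det * (Qᴴ * Q).det * M.det) * (z • (1 : Matrix (Fin s) (Fin s) ℂ) - J₁).det := by
    intro z
    have h1 : z • (Wᴴ * B * V) - Wᴴ * A * V = Gᴴ * (Qᴴ * Q) * (z • 1 - J₁) * M := by
      have hb : Wᴴ * B * V = Gᴴ * (Qᴴ * Q) * M := by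
        calc Wᴴ * B * V = Gᴴ * (Qᴴ * (B * P)) * M := by
              rw [hWG, hVM, Matrix.conjTranspose_mul]; simp only [Matrix.mul_assoc]
          _ = _ := by rw [hBP]
      have ha : Wᴴ * A * V = Gᴴ * (Qᴴ * Q) * J₁ * M := by
        calc Wᴴ * A * V = Gᴴ * (Qᴴ * (A * P)) * M := by
              rw [hWG, hVM, Matrix.conjTranspose_mul]; simp only [Matrix.mul_assoc]
          _ = _ := by rw [hAP]; simp only [Matrix.mul_assoc]
      rw [hb, ha, Matrix.mul_sub, Matrix.sub_mul, Matrix.mul_smul, Matrix.mul_one, Matrix.smul_mul]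
    rw [h1]
    simp only [Matrix.det_mul (Gᴴ * (Qᴴ * Q) * (z • 1 - J₁)) M, Matrix.det_mul (Gᴴ * (Qᴴ * Q)),
      Matrix.det_mul Gᴴ]
    ring
  have hc : (Gᴴ).det * (Qᴴ * Q).det * M.det ≠ 0 := by
    refine mul_ne_zero (mul_ne_zero ?_ (aux_gram Q _ hQl)) hM
    rw [Matrix.det_conjTranspose]
    exact star_ne_zero.mpr hGd
  refine ⟨⟨_, hc, key⟩, ?_⟩
  intro z
  have htri : (z • (1 : Matrix (Fin s) (Fin s) ℂ) - J₁).BlockTriangular id := by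
    intro i j hij
    have hij' : j < i := hij
    have h2 : J (e₂ (Sum.inl i)) (e₂ (Sum.inl j)) = 0 := by
      apply hJtri
      simp only [id, Fin.lt_def] at *
      simpa [he₂] using hij'
    rw [hJ] at h2
    simp only [Matrix.submatrix_apply, Equiv.symm_apply_apply, Matrix.fromBlocks_apply₁₁] at h2
    simp [h2, Matrix.one_apply, hij'.ne']
  rw [Matrix.isUnit_iff_isUnit_det, isUnit_iff_ne_zero, not_not, key, mul_eq_zero,
    or_iff_right hc, Matrix.det_of_upperTriangular htri, Finset.prod_eq_zero_iff]
  simp [sub_eq_zero]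
end
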